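/- Let A be a random s×t matrix over F_q with arbitrary distribution and B an independent totally random t×m matrix over F_q. Then for any r ≤ min(n, m, t), Pr{rank(AB) = r | rank(A) = n} = ζ_r^{n,m}, where ζ_r^{n,m} = q^{-(n-r)(m-r)} ∏_{k=0}^{r-1} (1-q^{-n+k})(1-q^{-m+k})/(1-q^{-r+k}). -/

import Mathlib

open scoped Classical

/-- `ζ_r^{n,m} = q^{-(n-r)(m-r)} ∏_{k=0}^{r-1} (1-q^{-n+k})(1-q^{-m+k})/(1-q^{-r+k})`. -/
noncomputable def zeta2 (q : ℝ) (r n m : ℕ) : ℝ :=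
  q ^ (-(((n : ℤ) - r) * ((m : ℤ) - r))) *
    ∏ k ∈ Finset.range r,
      ((1 - q ^ ((k : ℤ) - n)) * (1 - q ^ ((k : ℤ) - m)) / (1 - q ^ ((k : ℤ) - r)))

theorem zeta2_eq (q : ℝ) (r n m : ℕ) :
    zeta2 q r n m = q ^ (-(((n : ℤ) - r) * ((m : ℤ) - r))) *
      ((∏ k ∈ Finset.range r, (1 - q ^ ((k : ℤ) - n))) *
        (∏ k ∈ Finset.range r, (1 - q ^ ((k : ℤ) - m))) /
        ∏ k ∈ Finset.range r, (1 - q ^ ((k : ℤ) - r))) := by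
  rw [zeta2, Finset.prod_div_distrib, Finset.prod_mul_distrib]

theorem zeta2_zero_left (q : ℝ) (n m : ℕ) : zeta2 q 0 n m = q ^ (-((n : ℤ) * m)) := by
  simp [zeta2]

theorem zeta2_succ_zero_right (q : ℝ) (r n : ℕ) : zeta2 q (r + 1) n 0 = 0 := by
  simp [zeta2, Finset.prod_range_succ']

theorem prod_one_sub_zpow_succ (q : ℝ) (r m : ℕ) :
    ∏ k ∈ Finset.range (r + 1), (1 - q ^ ((k : ℤ) - (m + 1 : ℕ))) =
      (∏ k ∈ Finset.range r, (1 - q ^ ((k : ℤ) - m))) * (1 - q ^ (-(m : ℤ) - 1)) := by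
  rw [Finset.prod_range_succ']
  congr 1
  · refine Finset.prod_congr rfl fun k _ => ?_
    congr 2
    push_cast
    ring
  · congr 2
    push_cast
    ring

/-- The `q`-Pascal recurrence for `zeta2` in the number of columns. -/
theorem zeta2_succ_succ {q : ℝ} (hq : 1 < q) (r n m : ℕ) :
    zeta2 q (r + 1) n (m + 1) =
      q ^ ((r : ℤ) + 1 - n) * zeta2 q (r + 1) n m +
        (1 - q ^ ((r : ℤ) - n)) * zeta2 q r n m := by
  have hq0 : q ≠ 0 := by positivity
  have hr : 1 - q ^ (-(r : ℤ) - 1) ≠ 0 := by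
    have : q ^ (-(r : ℤ) - 1) < 1 := zpow_lt_one_of_neg₀ hq (by lia)
    exact (sub_pos.2 this).ne'
  rw [zeta2_eq, zeta2_eq, zeta2_eq, prod_one_sub_zpow_succ, prod_one_sub_zpow_succ,
    Finset.prod_range_succ, Finset.prod_range_succ]
  set P := ∏ k ∈ Finset.range r, (1 - q ^ ((k : ℤ) - n))
  set M := ∏ k ∈ Finset.range r, (1 - q ^ ((k : ℤ) - m))
  set D := ∏ k ∈ Finset.range r, (1 - q ^ ((k : ℤ) - r))
  have h1 : q ^ (-(((n : ℤ) - (r + 1 : ℕ)) * ((m + 1 : ℕ) - (r + 1 : ℕ)))) =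
      q ^ ((r : ℤ) + 1 - n) * q ^ (-(((n : ℤ) - (r + 1 : ℕ)) * (m - (r + 1 : ℕ)))) := by
    rw [← zpow_add₀ hq0]
    congr 1
    push_cast
    ring
  have h2 : q ^ (-(((n : ℤ) - r) * (m - r))) =
      q ^ ((r : ℤ) + 1 - n) * q ^ (-(((n : ℤ) - (r + 1 : ℕ)) * (m - (r + 1 : ℕ)))) *
        q ^ ((r : ℤ) - m) := by
    rw [← zpow_add₀ hq0, ← zpow_add₀ hq0]
    congr 1
    push_cast
    ring
  have h3 : q ^ (-(m : ℤ) - 1) = q ^ ((r : ℤ) - m) * q ^ (-(r : ℤ) - 1) := by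
    rw [← zpow_add₀ hq0]
    congr 1
    ring
  rw [h1, h2, h3, mul_comm D, ← div_div, ← div_div]
  generalize q ^ (-(r : ℤ) - 1) = u at *
  field_simp
  ring

section Counting

open Module

variable {F V W : Type*} [Field F] [AddCommGroup V] [Module F V] [AddCommGroup W] [Module F W]

theorem finrank_comap_add_finrank_range [FiniteDimensional F V] (f : V →ₗ[F] W)
    {U : Submodule F W} (hU : U ≤ LinearMap.range f) :
    finrank F (U.comap f) + finrank F (LinearMap.range f) = finrank F U + finrank F V := by
  have h := LinearMap.finrank_range_add_finrank_ker (f.domRestrict (U.comap f))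
  have h' := LinearMap.finrank_range_add_finrank_ker f
  have hrange : LinearMap.range (f.domRestrict (U.comap f)) = U := by
    rw [LinearMap.range_domRestrict, Submodule.map_comap_eq, inf_eq_right.2 hU]
  have hker : finrank F (LinearMap.ker (f.domRestrict (U.comap f))) =
      finrank F (LinearMap.ker f) := by
    rw [LinearMap.ker_domRestrict]
    exact (Submodule.comapSubtypeEquivOfLe (LinearMap.ker_le_comap f)).finrank_eq
  rw [hrange, hker] at h
  omega

theorem finrank_span_insert_eq [FiniteDimensional F W] (s : Set W) (w : W) :
    finrank F (Submodule.span F (insert w s)) =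
      if w ∈ Submodule.span F s then finrank F (Submodule.span F s)
      else finrank F (Submodule.span F s) + 1 := by
  split_ifs with h
  · rw [Submodule.span_insert_eq_span h]
  · rw [Submodule.span_insert, sup_comm, Submodule.finrank_sup_span_singleton h]

variable [Fintype F] [Fintype V]

theorem card_preimage_submodule [FiniteDimensional F V] (f : V →ₗ[F] W)
    {U : Submodule F W} (hU : U ≤ LinearMap.range f) :
    (Fintype.card {v // f v ∈ U} : ℝ) =
      (Fintype.card F : ℝ) ^
        ((finrank F U : ℤ) - finrank F (LinearMap.range f) + finrank F V) := by
  have h := finrank_comap_add_finrank_range f hU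
  have hc : Fintype.card {v // f v ∈ U} = Fintype.card F ^ finrank F (U.comap f) :=
    Module.card_eq_pow_finrank (K := F) (V := U.comap f)
  rw [hc, Nat.cast_pow, ← zpow_natCast]
  congr 1
  omega

/-- Among all vectors `v`, the number of those that make the images under `f` of the tuple
`Fin.cons v b` span a space of dimension `r`. -/
theorem sum_finrank_span_image_cons [FiniteDimensional F W] (f : V →ₗ[F] W) {m : ℕ}
    (b : Fin m → V) (r : ℕ) :
    (∑ v, if finrank F (Submodule.span F (Set.range (f ∘ (Fin.cons v b : Fin (m + 1) → V)))) = r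
        then (1 : ℝ) else 0) =
      Fintype.card V *
        ((Fintype.card F : ℝ) ^ ((r : ℤ) - finrank F (LinearMap.range f)) *
            (if finrank F (Submodule.span F (Set.range (f ∘ b))) = r then 1 else 0) +
          (1 - (Fintype.card F : ℝ) ^ ((r : ℤ) - 1 - finrank F (LinearMap.range f))) *
            if finrank F (Submodule.span F (Set.range (f ∘ b))) + 1 = r then 1 else 0) := by
  have hq0 : (Fintype.card F : ℝ) ≠ 0 := by positivity
  have hV : (Fintype.card V : ℝ) = (Fintype.card F : ℝ) ^ (finrank F V : ℤ) := by
    rw [Module.card_eq_pow_finrank (K := F) (V := V), zpow_natCast, Nat.cast_pow]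
  have hle : Submodule.span F (Set.range (f ∘ b)) ≤ LinearMap.range f := by
    rw [Submodule.span_le]
    rintro _ ⟨i, rfl⟩
    exact ⟨b i, rfl⟩
  have hcard := card_preimage_submodule f hle
  rw [Fintype.card_subtype, ← Finset.sum_boole, zpow_add₀ hq0, ← hV] at hcard
  have hcons (v : V) :
      finrank F (Submodule.span F (Set.range (f ∘ (Fin.cons v b : Fin (m + 1) → V)))) =
        if f v ∈ Submodule.span F (Set.range (f ∘ b))
        then finrank F (Submodule.span F (Set.range (f ∘ b)))
        else finrank F (Submodule.span F (Set.range (f ∘ b))) + 1 := by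
    rw [← finrank_span_insert_eq, Set.range_comp, Fin.range_cons, Set.image_insert_eq,
      Set.range_comp]
  simp_rw [hcons]
  generalize finrank F (Submodule.span F (Set.range (f ∘ b))) = d at *
  generalize finrank F (LinearMap.range f) = n at *
  have hsplit (v : V) :
      (if (if f v ∈ Submodule.span F (Set.range (f ∘ b)) then d else d + 1) = r
        then (1 : ℝ) else 0) =
        (if d + 1 = r then 1 else 0) +
          ((if d = r then 1 else 0) - if d + 1 = r then 1 else 0) *
          if f v ∈ Submodule.span F (Set.range (f ∘ b)) then 1 else 0 := by
    by_cases h : f v ∈ Submodule.span F (Set.range (f ∘ b)) <;> simp [h]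
  simp_rw [hsplit]
  rw [Finset.sum_add_distrib, ← Finset.mul_sum, hcard, Finset.sum_const,
    Finset.card_univ, nsmul_eq_mul]
  by_cases h1 : d = r
  · subst h1
    simp
    ring
  · by_cases h2 : d + 1 = r
    · subst h2
      simp
      ring
    · simp [h1, h2]

/-- The number of `m`-tuples of vectors whose images under `f` span a space of dimension `r`. -/
theorem sum_finrank_span_image_eq [FiniteDimensional F W] (f : V →ₗ[F] W) (m r : ℕ) :
    (∑ b : Fin m → V, if finrank F (Submodule.span F (Set.range (f ∘ b))) = r
        then (1 : ℝ) else 0) =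
      (Fintype.card V : ℝ) ^ m *
        zeta2 (Fintype.card F) r (finrank F (LinearMap.range f)) m := by
  have hq : (1 : ℝ) < Fintype.card F := by exact_mod_cast Fintype.one_lt_card
  have hq0 : (Fintype.card F : ℝ) ≠ 0 := by positivity
  induction m generalizing r with
  | zero =>
    have hb (b : Fin 0 → V) : finrank F (Submodule.span F (Set.range (f ∘ b))) = 0 := by
      rw [Set.range_eq_empty, Submodule.span_empty, finrank_bot]
    simp_rw [hb]
    cases r with
    | zero => simp [zeta2_zero_left]
    | succ r => simp [zeta2_succ_zero_right]
  | succ m ih =>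
    rw [← (Fin.consEquiv fun _ => V).sum_comp, Fintype.sum_prod_type_right]
    refine (Finset.sum_congr rfl fun b _ => sum_finrank_span_image_cons f b r).trans ?_
    rw [← Finset.mul_sum, Finset.sum_add_distrib, ← Finset.mul_sum, ← Finset.mul_sum, ih]
    generalize finrank F (LinearMap.range f) = n at *
    generalize (Fintype.card F : ℝ) = q at *
    cases r with
    | zero =>
      simp only [zeta2_zero_left, Nat.add_one_ne_zero, if_false, Finset.sum_const_zero]
      rw [show (-((n : ℤ) * (m + 1 : ℕ))) = ((0 : ℕ) : ℤ) - n + -((n : ℤ) * m) by push_cast; ring,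
        zpow_add₀ hq0]
      ring
    | succ r =>
      simp only [Nat.add_right_cancel_iff]
      rw [ih, zeta2_succ_succ hq]
      push_cast
      rw [add_sub_cancel_right]
      ring

end Counting

theorem card_rank_mul_eq {F : Type*} [Field F] [Fintype F] {s t : ℕ} (m r : ℕ)
    (a : Matrix (Fin s) (Fin t) F) :
    (Fintype.card {b : Matrix (Fin t) (Fin m) F // (a * b).rank = r} : ℝ) =
      Fintype.card (Matrix (Fin t) (Fin m) F) * zeta2 (Fintype.card F) r a.rank m := by
  have h := sum_finrank_span_image_eq a.mulVecLin m r
  have hV : (Fintype.card (Matrix (Fin t) (Fin m) F) : ℝ) =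
      (Fintype.card (Fin t → F) : ℝ) ^ m := by
    rw [Fintype.card_congr (Matrix.transposeAddEquiv (Fin t) (Fin m) F).toEquiv]
    have : Fintype.card (Matrix (Fin m) (Fin t) F) = Fintype.card (Fin m → Fin t → F) :=
      Fintype.card_congr (Equiv.refl _)
    rw [this]
    simp
  rw [hV, Matrix.rank, ← h, Finset.sum_boole, ← Fintype.card_subtype]
  congr 1
  refine Fintype.card_congr ((Matrix.transposeAddEquiv (Fin t) (Fin m) F).toEquiv.subtypeEquiv
    fun b => ?_)
  rw [Matrix.rank_eq_finrank_span_cols]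
  rfl

theorem toOuterMeasure_rank_mul_eq {F : Type*} [Field F] [Fintype F] {s t : ℕ} (m r : ℕ)
    (a : Matrix (Fin s) (Fin t) F) :
    (PMF.uniformOfFintype (Matrix (Fin t) (Fin m) F)).toOuterMeasure {b | (a * b).rank = r} =
      ENNReal.ofReal (zeta2 (Fintype.card F) r a.rank m) := by
  have hpos : (0 : ℝ) < Fintype.card (Matrix (Fin t) (Fin m) F) := by
    exact_mod_cast Fintype.card_pos
  rw [PMF.toOuterMeasure_uniformOfFintype_apply,
    ← mul_div_cancel_left₀ (zeta2 (Fintype.card F) r a.rank m) hpos.ne', ← card_rank_mul_eq,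
    ENNReal.ofReal_div_of_pos hpos, ENNReal.ofReal_natCast, ENNReal.ofReal_natCast]
  rfl

/-- Let `A` be a random `s × t` matrix over `F_q` with arbitrary distribution
and `B` an independent totally random `t × m` matrix.  Conditional on
`rank A = n` (an event of positive probability), `rank (A * B) = r` has
probability `ζ_r^{n,m}`, for any `r ≤ min (n, m, t)`. -/
theorem cond_rank_mul_totally_random
    {F : Type*} [Field F] [Fintype F] [DecidableEq F]
    (s t m : ℕ) (A : PMF (Matrix (Fin s) (Fin t) F))
    (n r : ℕ) (hr : r ≤ min n (min m t))
    (joint : PMF (Matrix (Fin s) (Fin t) F × Matrix (Fin t) (Fin m) F))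
    (hjoint : joint =
      A.bind fun a =>
        (PMF.uniformOfFintype (Matrix (Fin t) (Fin m) F)).map fun b => (a, b))
    (hpos : joint.toOuterMeasure {p | p.1.rank = n} ≠ 0) :
    joint.toOuterMeasure {p | (p.1 * p.2).rank = r ∧ p.1.rank = n} /
        joint.toOuterMeasure {p | p.1.rank = n} =
      ENNReal.ofReal (zeta2 (Fintype.card F) r n m) := by
  have hden : joint.toOuterMeasure {p | p.1.rank = n} =
      ∑' a, A a * if a.rank = n then 1 else 0 := by
    rw [hjoint, PMF.toOuterMeasure_bind_apply]
    refine tsum_congr fun a => ?_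
    congr 1
    rw [PMF.toOuterMeasure_map_apply]
    split_ifs with h
    · rw [PMF.toOuterMeasure_apply_eq_one_iff]
      exact fun b _ => h
    · simp [h]
  have hnum : joint.toOuterMeasure {p | (p.1 * p.2).rank = r ∧ p.1.rank = n} =
      (∑' a, A a * if a.rank = n then 1 else 0) *
        ENNReal.ofReal (zeta2 (Fintype.card F) r n m) := by
    rw [hjoint, PMF.toOuterMeasure_bind_apply, ← ENNReal.tsum_mul_right]
    refine tsum_congr fun a => ?_
    rw [mul_assoc]
    congr 1
    rw [PMF.toOuterMeasure_map_apply]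
    split_ifs with h
    · rw [one_mul, ← h, ← toOuterMeasure_rank_mul_eq]
      congr 1
      ext b
      simp
    · simp [h]
  have htop : joint.toOuterMeasure {p | p.1.rank = n} ≠ ⊤ := by
    rw [PMF.toOuterMeasure_apply]
    exact joint.tsum_coe_indicator_ne_top _
  rw [hnum, ← hden, mul_comm]
  exact ENNReal.mul_div_cancel_right hpos htop
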